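/- arXiv:2603.04188 — 2 statements merged into one kernel-verified Lean document; each statement's English description precedes it below -/
import Mathlib

section
/- For all real numbers x, y, z in the open interval (-1, 1), one has (x + y)/(1 + x·y) ≤ z if and only if x ≤ (z - y)/(1 - z·y). That is, hyperbolic subtraction [y, z] = (z - y)/(1 - z·y) is an internal hom for the hyperbolic sum, making the certainty factor calculus CF closed. -/
theorem mul_mem_Ioo_neg_one_one {R : Type*} [Ring R] [LinearOrder R] [IsOrderedRing R] {x y : R}
    (hx : x ∈ Set.Ioo (-1) 1) (hy : y ∈ Set.Ioo (-1) 1) : x * y ∈ Set.Ioo (-1) 1 := by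
  have hxy : |x * y| < 1 := by
    rw [abs_mul]
    exact mul_lt_one_of_nonneg_of_lt_one_left (abs_nonneg x) (abs_lt.2 hx) (abs_lt.2 hy).le
  exact abs_lt.1 hxy

theorem cf_closed_general {K : Type*} [Field K] [LinearOrder K] [IsStrictOrderedRing K] {x y z : K}
    (hxy : 0 < 1 + x * y) (hzy : 0 < 1 - z * y) :
    (x + y) / (1 + x * y) ≤ z ↔ x ≤ (z - y) / (1 - z * y) :=
  calc
    (x + y) / (1 + x * y) ≤ z ↔ x + y ≤ z * (1 + x * y) := div_le_iff₀ hxy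
    _ ↔ x * (1 - z * y) ≤ z - y := by
      have slack_eq : z * (1 + x * y) - (x + y) = (z - y) - x * (1 - z * y) := by ring
      rw [← sub_nonneg, slack_eq, sub_nonneg]
    _ ↔ x ≤ (z - y) / (1 - z * y) := (le_div_iff₀ hzy).symm

/-- Hyperbolic subtraction is an internal hom for the hyperbolic sum:
the certainty factor calculus CF is closed. -/
theorem cf_closed :
    ∀ x ∈ Set.Ioo (-1 : ℝ) 1, ∀ y ∈ Set.Ioo (-1 : ℝ) 1, ∀ z ∈ Set.Ioo (-1 : ℝ) 1,
      (x + y) / (1 + x * y) ≤ z ↔ x ≤ (z - y) / (1 - z * y) :=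
  fun _ hx _ hy _ hz ↦ cf_closed_general
    (neg_lt_iff_pos_add'.1 (mul_mem_Ioo_neg_one_one hx hy).1)
    (sub_pos.2 (mul_mem_Ioo_neg_one_one hz hy).2)
end

section
/- Let V be a partially ordered set with a binary operation ⊗ that is commutative, associative, monotone in each argument, has unit 1, and admits an internal hom [-,-] satisfying x ⊗ y ≤ z if and only if x ≤ [y, z] for all x, y, z. Let X be a set and d : X × X → V a strict V-enrichment, i.e. d(x, x) = 1 for all x and d(y, z) ⊗ d(x, y) = d(x, z) for all x, y, z. Fix E ∈ X and define the V-update d_E(x, y) = [d(x, y) ⊗ d(y, E), d(x, E)]. Then d_E is again a V-enrichment in the lax sense: 1 ≤ d_E(x, x) for all x, and d_E(y, z) ⊗ d_E(x, y) ≤ d_E(x, z) for all x, y, z. -/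
/-!
Composition of internal homs gives
`d_E(y, z) ⊗ d_E(x, y) ≤ [d(x, y) ⊗ (d(y, z) ⊗ d(z, E)), d(x, E)]`. As `[-, c]` is antitone, the
inequality `d(x, z) ≤ d(y, z) ⊗ d(x, y)` bounds the right-hand side by `d_E(x, z)`. By adjunction,
`1 ≤ d_E(x, x)` says that `d(x, x) ⊗ d(x, E) ≤ d(x, E)`.
-/

/-- Lax `V`-enrichments of a set `X`; the product of `V` plays the role of `⊗`. -/
structure IsLaxEnrichment {V X : Type*} [LE V] [MulOneClass V] (d : X → X → V) : Prop where
  one_le : ∀ x, 1 ≤ d x x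
  mul_le : ∀ x y z, d y z * d x y ≤ d x z

/-- The `V`-update `d_E` of `d` on evidence `E`, for an internal hom given as a bare operation
`hom`: `hom y z` stands for `[y, z]`. -/
def vUpdate {V X : Type*} [Mul V] (hom : V → V → V) (d : X → X → V) (E x y : X) : V :=
  hom (d x y * d y E) (d x E)

section InternalHom

variable {V : Type*} [Preorder V] {hom : V → V → V}

theorem mulLeftMono_of_galoisConnection [CommMagma V]
    (hadj : ∀ y, GaloisConnection (· * y) (hom y)) : MulLeftMono V where
  elim a b c hbc := by simpa only [mul_comm a] using (hadj a).monotone_l hbc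

theorem antitone_hom_left [CommMagma V] (hadj : ∀ y, GaloisConnection (· * y) (hom y)) (c : V) :
    Antitone (hom · c) := by
  intro a b hab
  have := mulLeftMono_of_galoisConnection hadj
  refine (hadj a).le_u ?_
  calc hom b c * a ≤ hom b c * b := mul_le_mul_right hab _
    _ ≤ c := (hadj b).l_u_le c

theorem hom_mul_hom_mul_le [CommSemigroup V] (hadj : ∀ y, GaloisConnection (· * y) (hom y))
    (a b c e : V) : hom b c * hom (a * c) e ≤ hom (a * b) e := by
  have := mulLeftMono_of_galoisConnection hadj
  refine (hadj (a * b)).le_u ?_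
  calc hom b c * hom (a * c) e * (a * b) = hom (a * c) e * a * (hom b c * b) := by ac_rfl
    _ ≤ hom (a * c) e * a * c := mul_le_mul_right ((hadj b).l_u_le c) _
    _ = hom (a * c) e * (a * c) := mul_assoc _ _ _
    _ ≤ e := (hadj (a * c)).l_u_le e

end InternalHom

section Update

variable {V X : Type*} [Preorder V] {hom : V → V → V} {d : X → X → V}

theorem one_le_vUpdate_self_iff [MulOneClass V] (hadj : ∀ y, GaloisConnection (· * y) (hom y))
    {E x : X} : 1 ≤ vUpdate hom d E x x ↔ d x x * d x E ≤ d x E := by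
  rw [vUpdate, ← (hadj _).le_iff_le, one_mul]

theorem vUpdate_mul_vUpdate_le [CommSemigroup V] (hadj : ∀ y, GaloisConnection (· * y) (hom y))
    (E : X) {x y z : X} (hxyz : d x z ≤ d y z * d x y) :
    vUpdate hom d E y z * vUpdate hom d E x y ≤ vUpdate hom d E x z := by
  have hxyzE : d x z * d z E ≤ d x y * (d y z * d z E) := by
    rw [← mul_assoc, mul_comm (d x y)]
    exact (hadj (d z E)).monotone_l hxyz
  calc vUpdate hom d E y z * vUpdate hom d E x y
      ≤ hom (d x y * (d y z * d z E)) (d x E) := hom_mul_hom_mul_le hadj _ _ _ _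
    _ ≤ vUpdate hom d E x z := antitone_hom_left hadj _ hxyzE

theorem update_is_lax_enrichment_general [CommMonoid V]
    (hadj : ∀ y, GaloisConnection (· * y) (hom y)) (E : X)
    (hid : ∀ x, d x x * d x E ≤ d x E) (hcompose : ∀ x y z, d x z ≤ d y z * d x y) :
    IsLaxEnrichment (vUpdate hom d E) where
  one_le x := (one_le_vUpdate_self_iff hadj).2 (hid x)
  mul_le x y z := vUpdate_mul_vUpdate_le hadj E (hcompose x y z)

end Update

/-- In any closed epistemic calculus V, the V-update of a strict
V-enrichment d of a set X based on evidence E, namely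
d_E(x, y) = [d(x, y) ⊗ d(y, E), d(x, E)], is again a V-enrichment in the lax sense. -/
theorem update_is_lax_enrichment
    {V : Type*} [PartialOrder V] (op : V → V → V) (one : V) (hom : V → V → V)
    (hcomm : ∀ x y : V, op x y = op y x)
    (hassoc : ∀ x y z : V, op (op x y) z = op x (op y z))
    (hmono : ∀ x y z w : V, x ≤ y → z ≤ w → op x z ≤ op y w)
    (hunit : ∀ x : V, op x one = x)
    (hadj : ∀ x y z : V, op x y ≤ z ↔ x ≤ hom y z)
    {X : Type*} (d : X → X → V)
    (hid : ∀ x : X, d x x = one)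
    (hcompose : ∀ x y z : X, op (d y z) (d x y) = d x z)
    (E : X)
    (dE : X → X → V)
    (hdE : ∀ x y : X, dE x y = hom (op (d x y) (d y E)) (d x E)) :
    (∀ x : X, one ≤ dE x x) ∧
    (∀ x y z : X, op (dE y z) (dE x y) ≤ dE x z) := by
  let _ : CommMonoid V :=
    { mul := op, one := one, mul_assoc := hassoc, mul_comm := hcomm, mul_one := hunit,
      one_mul := fun x => (hcomm one x).trans (hunit x) }
  obtain rfl : dE = vUpdate hom d E := funext₂ hdE
  have hlax : IsLaxEnrichment (vUpdate hom d E) :=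
    update_is_lax_enrichment_general (fun y x z => hadj x y z) E
      (fun x => ((hcomm _ _).trans (hcompose x x E)).le) (fun x y z => (hcompose x y z).ge)
  exact ⟨hlax.one_le, hlax.mul_le⟩
end
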